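/- arXiv:2503.11783 — 7 statements merged into one kernel-verified Lean document; each statement's English description precedes it below -/
import Mathlib

section
/- Fix a natural number n ≥ 1. Define F(γ) = 2/(1 + (1-γ)^{-n}) + n·γ/((1-γ)^{1-n} + (1-γ)). Then F(γ) = 1 - (n² - n)·γ²/4 + O(γ³) as γ → 0⁺. -/
/-!
Put `q = 1 - γ` and `a = q ^ n`. Clearing negative powers, the fidelity is
`a (2 q + n γ) / (q (1 + a))`. Write `a = 1 - n γ + n (n - 1) / 2 γ² + γ³ r(γ)` with `r` continuous
(`one_sub_pow_expansion`). With `c = (n² - n) / 4`, substituting this shows that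
`a (2 q + n γ) - (1 - c γ²) q (1 + a)` is `γ³` times a continuous function of `γ`, which is bounded
on `[0, 1/2]`; there the denominator `q (1 + a)` is at least `1/2`.
-/

/-- Second-order expansion of `(1 - x) ^ n` with a continuous cubic remainder coefficient. -/
lemma one_sub_pow_expansion (n : ℕ) : ∃ r : ℝ → ℝ, Continuous r ∧
    ∀ x : ℝ, (1 - x) ^ n = 1 - n * x + ((n : ℝ) ^ 2 - n) / 2 * x ^ 2 + x ^ 3 * r x := by
  induction n with
  | zero => exact ⟨fun _ => 0, continuous_const, fun x => by simp⟩
  | succ n ih =>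
    obtain ⟨r, hr, h⟩ := ih
    refine ⟨fun x => -(((n : ℝ) ^ 2 - n) / 2) + (1 - x) * r x, by fun_prop, fun x => ?_⟩
    rw [pow_succ, h]
    push_cast
    ring

/-- Worst-case fidelity of the NSA ((n,k)) self-complementary AD code:
`F(γ) = 2/(1+(1-γ)^{-n}) + nγ/((1-γ)^{1-n}+(1-γ)) = 1 - (n²-n)γ²/4 + O(γ³)` as `γ → 0⁺`. -/
theorem stmt_6 (n : ℕ) (hn : 1 ≤ n) :
    ∃ C : ℝ, 0 < C ∧ ∃ δ : ℝ, 0 < δ ∧ δ < 1 ∧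
      ∀ γ : ℝ, 0 < γ → γ < δ →
        |2 / (1 + (1 - γ) ^ (-(n : ℤ)))
          + n * γ / ((1 - γ) ^ (1 - (n : ℤ)) + (1 - γ))
          - (1 - ((n : ℝ) ^ 2 - (n : ℝ)) * γ ^ 2 / 4)| ≤ C * γ ^ 3 := by
  obtain ⟨r, hr, h⟩ := one_sub_pow_expansion n
  obtain ⟨c, hc⟩ : ∃ c : ℝ, c = ((n : ℝ) ^ 2 - n) / 4 := ⟨_, rfl⟩
  -- `γ ^ 3 * G γ` is the numerator of the error over the common denominator `q (1 + a)`.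
  let G : ℝ → ℝ := fun x => c * (n - 4) + c * (n + 2 * c) * x - 2 * c ^ 2 * x ^ 2
    + r x * (1 + (n - 1) * x + c * x ^ 2 - c * x ^ 3)
  have hG : Continuous G := by fun_prop
  obtain ⟨M, hM⟩ := (isCompact_Icc (a := (0 : ℝ)) (b := 1 / 2)).exists_bound_of_continuousOn
    hG.continuousOn
  have hM0 : 0 ≤ M := (norm_nonneg _).trans (hM 0 (by norm_num))
  refine ⟨2 * M + 1, by positivity, 1 / 2, by norm_num, by norm_num, fun γ h0 h1 => ?_⟩
  have hMγ : |G γ| ≤ M := hM γ ⟨h0.le, h1.le⟩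
  have hq : 0 < 1 - γ := by linarith
  have ha : 0 < (1 - γ) ^ n := pow_pos hq n
  have key : 2 / (1 + (1 - γ) ^ (-(n : ℤ))) + n * γ / ((1 - γ) ^ (1 - (n : ℤ)) + (1 - γ))
      - (1 - ((n : ℝ) ^ 2 - (n : ℝ)) * γ ^ 2 / 4)
      = γ ^ 3 * G γ / ((1 - γ) * (1 + (1 - γ) ^ n)) := by
    have hnum : (1 - γ) ^ n * (2 * (1 - γ) + n * γ)
        - (1 - c * γ ^ 2) * ((1 - γ) * (1 + (1 - γ) ^ n)) = γ ^ 3 * G γ := by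
      have hn2 : (n : ℝ) ^ 2 = 4 * c + n := by rw [hc]; ring
      rw [h γ]
      simp only [G]
      rw [hn2]
      linear_combination (-γ ^ 2) * hn2
    have hc' : ((n : ℝ) ^ 2 - n) * γ ^ 2 / 4 = c * γ ^ 2 := by rw [hc]; ring
    rw [hc', ← hnum, zpow_sub₀ hq.ne', zpow_neg, zpow_one, zpow_natCast]
    generalize (1 - γ) ^ n = a at ha
    generalize 1 - γ = q at hq
    have h1a : 1 + a ≠ 0 := by positivity
    have h2 : 1 + a⁻¹ ≠ 0 := by positivity
    have h3 : q / a + q ≠ 0 := by positivity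
    have e1 : 2 / (1 + a⁻¹) = 2 * a / (1 + a) := by
      rw [div_eq_div_iff h2 h1a]; field_simp; ring
    have e2 : n * γ / (q / a + q) = n * γ * a / (q * (1 + a)) := by
      rw [div_eq_div_iff h3 (by positivity)]; field_simp
    rw [e1, e2]
    field_simp
  have hD : 1 / 2 ≤ (1 - γ) * (1 + (1 - γ) ^ n) := by nlinarith [mul_pos hq ha]
  have h3 : 0 < γ ^ 3 := by positivity
  rw [key, abs_div, abs_mul, abs_of_pos h3,
    abs_of_pos (a := (1 - γ) * (1 + (1 - γ) ^ n)) (by linarith), div_le_iff₀ (by linarith)]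
  calc γ ^ 3 * |G γ| ≤ γ ^ 3 * M := by gcongr
    _ ≤ (2 * M + 1) * γ ^ 3 * (1 / 2) := by linarith
    _ ≤ _ := by gcongr
end

section
/- Let q ≥ 1 and n be natural numbers. For a dit string u : Fin n → Fin q define u^{↑a} by (u^{↑a})_i = (u_i + a) mod q and ‖v‖ = Σ_i v_i. Then for every u and every index i ∈ Fin n, Σ_{a=0}^{q-1} (u^{↑a})_i · ‖u^{↑a}‖ ≤ n·(q-1)·q·(2q-1)/6, with equality when u is a constant dit string. -/
/-!
Exchanging the two sums, the left-hand side is `∑ j, ∑ a, x_i(a) * x_j(a)` with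
`x_j(a) = (u_j + a) mod q`. Each `x_j` is a permutation of `0, …, q - 1`, so it has the same sum of
squares `S = (q - 1) q (2q - 1) / 6` (`sum_shift_sq`). In place of the rearrangement inequality,
`2 x y ≤ x² + y²` summed over `a` already bounds every inner sum by `S` (`sum_shift_mul_le`), with
equality when `x_i = x_j`.
-/

/-- The shift `a ↦ (c + a) mod q` permutes the digits, so it preserves the sum of squares. -/
lemma sum_shift_sq (q : ℕ) (c : Fin q) :
    ∑ a : Fin q, (((c : ℕ) + (a : ℕ)) % q) ^ 2 = ∑ a : Fin q, (a : ℕ) ^ 2 := by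
  cases q with
  | zero => exact c.elim0
  | succ m =>
    rw [← Equiv.sum_comp (Equiv.addLeft c) (fun a : Fin (m + 1) => (a : ℕ) ^ 2)]
    simp [Fin.val_add]

lemma six_mul_sum_sq (q : ℕ) :
    6 * ∑ a : Fin q, (a : ℕ) ^ 2 = (q - 1) * q * (2 * q - 1) := by
  rw [Fin.sum_univ_eq_sum_range (fun a => a ^ 2)]
  induction q with
  | zero => simp
  | succ m ih =>
    rw [Finset.sum_range_succ, mul_add, ih]
    cases m with
    | zero => simp
    | succ k =>
      -- Rewriting the truncated subtractions as `+` leaves a polynomial identity.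
      have h1 : 2 * (k + 1) - 1 = 2 * k + 1 := by omega
      have h2 : 2 * (k + 1 + 1) - 1 = 2 * k + 3 := by omega
      rw [h1, h2, Nat.add_sub_cancel, Nat.add_sub_cancel]
      ring

/-- The numerator is divisible by `6`, so the natural-number division is exact. -/
lemma bound_eq (q n : ℕ) :
    n * (q - 1) * q * (2 * q - 1) / 6 = n * ∑ a : Fin q, (a : ℕ) ^ 2 := by
  apply Nat.div_eq_of_eq_mul_right (by norm_num)
  calc n * (q - 1) * q * (2 * q - 1) = n * ((q - 1) * q * (2 * q - 1)) := by ring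
    _ = 6 * (n * ∑ a : Fin q, (a : ℕ) ^ 2) := by rw [← six_mul_sum_sq]; ring

lemma sum_shift_mul_le (q : ℕ) (c d : Fin q) :
    ∑ a : Fin q, (((c : ℕ) + (a : ℕ)) % q) * (((d : ℕ) + (a : ℕ)) % q)
      ≤ ∑ a : Fin q, (a : ℕ) ^ 2 := by
  have h : ∑ a : Fin q, 2 * ((((c : ℕ) + (a : ℕ)) % q) * (((d : ℕ) + (a : ℕ)) % q))
      ≤ ∑ a : Fin q, ((((c : ℕ) + (a : ℕ)) % q) ^ 2 + (((d : ℕ) + (a : ℕ)) % q) ^ 2) :=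
    Finset.sum_le_sum fun a _ => by
      rw [← mul_assoc]
      exact two_mul_le_add_sq _ _
  rw [← Finset.mul_sum, Finset.sum_add_distrib, sum_shift_sq, sum_shift_sq] at h
  omega

/-- `Σ_a (u^{↑a})_i·‖u^{↑a}‖ ≤ n(q-1)q(2q-1)/6` for every dit string `u` and site `i`,
with equality when `u` is a constant dit string. -/
theorem stmt_10 (q n : ℕ) (hq : 1 ≤ q) :
    (∀ u : Fin n → Fin q, ∀ i : Fin n,
      ∑ a : Fin q, (((u i : ℕ) + (a : ℕ)) % q)
          * (∑ j : Fin n, (((u j : ℕ) + (a : ℕ)) % q))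
        ≤ n * (q - 1) * q * (2 * q - 1) / 6) ∧
    (∀ c : Fin q, ∀ i : Fin n,
      ∑ a : Fin q, (((c : ℕ) + (a : ℕ)) % q)
          * (∑ j : Fin n, (((c : ℕ) + (a : ℕ)) % q))
        = n * (q - 1) * q * (2 * q - 1) / 6) := by
  rw [bound_eq]
  refine ⟨fun u i => ?_, fun c _ => ?_⟩
  · simp_rw [Finset.mul_sum]
    rw [Finset.sum_comm]
    calc _ ≤ ∑ _j : Fin n, ∑ a : Fin q, (a : ℕ) ^ 2 :=
          Finset.sum_le_sum fun j _ => sum_shift_mul_le q (u i) (u j)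
      _ = _ := by simp [Finset.mul_sum]
  · rw [← sum_shift_sq q c, Finset.mul_sum]
    refine Finset.sum_congr rfl fun a _ => ?_
    rw [Finset.sum_const, Finset.card_univ, Fintype.card_fin, smul_eq_mul]
    ring
end

section
/- Let q ≥ 1 and n be natural numbers with q dividing n, and let γ ∈ [0,1]. For every dit string u : Fin n → Fin q (with u^{↑a} the digit-shift by a mod q and ‖·‖ the sum of digits), Σ_{a=0}^{q-1} (1-γ)^{‖u^{↑a}‖} ≥ q·(1-γ)^{n(q-1)/2}; moreover there exists u attaining equality, so min over u of (1/q)·Σ_a (1-γ)^{‖u^{↑a}‖} equals (1-γ)^{n(q-1)/2}. -/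
/-!
The shifts of a single digit run once through `0, …, q-1`, so the weights `‖u^{↑a}‖` have total
`q · n(q-1)/2` (`sum_fin_shift`). The sequence `k ↦ x ^ k` is convex for `0 ≤ x`; its discrete
tangent inequality at `m = n(q-1)/2` (`discrete_tangent`), summed over `a`, has a vanishing linear
term and gives the lower bound. Working with differences rather than logarithms also covers `x = 0`.
For the periodic string `u i = i % q` every shift has weight exactly `m` (`sum_periodic`), which
gives equality.
-/

lemma discrete_tangent (x : ℝ) (h0 : 0 ≤ x) (m k : ℕ) :
    x ^ m + ((k : ℝ) - m) * (x ^ m * (x - 1)) ≤ x ^ k := by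
  rcases le_total m k with h | h
  · obtain ⟨d, rfl⟩ := Nat.exists_eq_add_of_le h
    -- Bernoulli's inequality, scaled by `x ^ m`
    have hb := one_add_mul_le_pow (a := x - 1) (by linarith) d
    have := mul_le_mul_of_nonneg_left hb (pow_nonneg h0 m)
    rw [add_sub_cancel, ← pow_add] at this
    push_cast
    linarith
  · obtain ⟨d, rfl⟩ := Nat.exists_eq_add_of_le h
    have key : ∀ d : ℕ, x ^ d * (1 + d * (1 - x)) ≤ 1 := by
      intro d
      induction d with
      | zero => simp
      | succ d ih =>
        refine le_trans ?_ ih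
        rw [pow_succ, mul_assoc]
        refine mul_le_mul_of_nonneg_left ?_ (pow_nonneg h0 d)
        push_cast
        -- the difference of the two sides is `(d + 1) * (1 - x) ^ 2`
        have : 0 ≤ ((d : ℝ) + 1) * (1 - x) ^ 2 := by positivity
        nlinarith
    have := mul_le_mul_of_nonneg_left (key d) (pow_nonneg h0 k)
    rw [pow_add]
    push_cast
    linarith

lemma sum_fin_shift (q b : ℕ) : ∑ a : Fin q, ((b + (a : ℕ)) % q) = q * (q - 1) / 2 := by
  rcases Nat.eq_zero_or_pos q with rfl | hq
  · simp
  have : NeZero q := ⟨hq.ne'⟩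
  have h := Equiv.sum_comp (Equiv.addLeft (Fin.ofNat q b)) (fun a : Fin q => (a : ℕ))
  simp only [Equiv.coe_addLeft, Fin.val_add, Fin.val_ofNat, Nat.mod_add_mod] at h
  rw [h, Fin.sum_univ_eq_sum_range (fun i => i) q, Finset.sum_range_id]

lemma sum_periodic (q b m : ℕ) :
    ∑ i ∈ Finset.range (q * m), ((b + i) % q) = m * (q * (q - 1) / 2) := by
  induction m with
  | zero => simp
  | succ m ih =>
    rw [Nat.mul_succ, Finset.sum_range_add, ih, ← sum_fin_shift q (b + q * m),
      ← Fin.sum_univ_eq_sum_range (fun i => (b + (q * m + i)) % q) q]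
    simp only [← add_assoc]
    ring

/-- The half in `n(q-1)/2` is exact when `n = q * m`, since `q(q-1)` is even. -/
lemma half_weight (q m : ℕ) : q * m * (q - 1) / 2 = m * (q * (q - 1) / 2) := by
  rw [← Nat.mul_div_assoc m (Nat.even_mul_pred_self q).two_dvd]
  congr 1
  ring

/-- For `q ∣ n` and `γ ∈ [0,1]`: `Σ_a (1-γ)^{‖u^{↑a}‖} ≥ q(1-γ)^{n(q-1)/2}` for every
dit string `u`, with equality attained by some `u`; hence
`min_u (1/q)Σ_a (1-γ)^{‖u^{↑a}‖} = (1-γ)^{n(q-1)/2}`. -/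
theorem stmt_11 (q n : ℕ) (hq : 1 ≤ q) (hqn : q ∣ n)
    (γ : ℝ) (hγ0 : 0 ≤ γ) (hγ1 : γ ≤ 1) :
    (∀ u : Fin n → Fin q,
      ∑ a : Fin q, (1 - γ) ^ (∑ i : Fin n, (((u i : ℕ) + (a : ℕ)) % q))
        ≥ (q : ℝ) * (1 - γ) ^ (n * (q - 1) / 2)) ∧
    (∃ u : Fin n → Fin q,
      ∑ a : Fin q, (1 - γ) ^ (∑ i : Fin n, (((u i : ℕ) + (a : ℕ)) % q))
        = (q : ℝ) * (1 - γ) ^ (n * (q - 1) / 2)) := by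
  obtain ⟨m, rfl⟩ := hqn
  rw [half_weight]
  constructor
  · intro u
    set M := m * (q * (q - 1) / 2) with hM
    have tot : ∑ a : Fin q, ∑ i : Fin (q * m), (((u i : ℕ) + (a : ℕ)) % q) = q * M := by
      rw [Finset.sum_comm]
      simp only [sum_fin_shift, Finset.sum_const, Finset.card_univ, Fintype.card_fin, smul_eq_mul]
      rw [hM, mul_assoc]
    have totR : ∑ a : Fin q, ((∑ i : Fin (q * m), (((u i : ℕ) + (a : ℕ)) % q) : ℕ) : ℝ)
        = q * M := by
      rw [← Nat.cast_sum, tot, Nat.cast_mul]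
    have h := Finset.sum_le_sum (s := Finset.univ) fun (a : Fin q) _ =>
      discrete_tangent (1 - γ) (by linarith) M (∑ i : Fin (q * m), (((u i : ℕ) + (a : ℕ)) % q))
    rw [Finset.sum_add_distrib, ← Finset.sum_mul, Finset.sum_sub_distrib, totR] at h
    simpa using h
  · refine ⟨fun i => ⟨(i : ℕ) % q, Nat.mod_lt _ hq⟩, ?_⟩
    have hw : ∀ a : Fin q, ∑ i : Fin (q * m), (((i : ℕ) % q + (a : ℕ)) % q)
        = m * (q * (q - 1) / 2) := by
      intro a
      rw [← sum_periodic q a m, ← Fin.sum_univ_eq_sum_range (fun i => ((a : ℕ) + i) % q) (q * m)]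
      simp only [Nat.add_mod_mod, add_comm]
    simp only [hw]
    simp
end

section
/- Let q ≥ 1 and n be natural numbers and let x be a real number with 0 < x ≤ 1. For every dit string u : Fin n → Fin q (with u^{↑a} the digit-shift by a mod q and ‖·‖ the sum of digits), Σ_{a=0}^{q-1} x^{-‖u^{↑a}‖} ≤ Σ_{a=0}^{q-1} x^{-a·n}. -/
/-!
With `y = x⁻¹`, the summand at shift `a` is the product over sites `i` of `y ^ dᵢ(a)`, where
`dᵢ(a) = (uᵢ + a) mod q`. By AM-GM this product is at most the average over `i` of `y ^ (n dᵢ(a))`.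
For each fixed site, `a ↦ dᵢ(a)` permutes `{0, …, q-1}`, so summing over `a` turns every term of the
average into `∑ a, y ^ (n a)`, which is the right-hand side.
-/

/-- AM-GM for powers of a common base. -/
lemma pow_sum_le_avg (n : ℕ) (hn : n ≠ 0) (y : ℝ) (hy : 0 ≤ y) (d : Fin n → ℕ) :
    y ^ (∑ i, d i) ≤ ∑ i, (n : ℝ)⁻¹ * y ^ (d i * n) := by
  have h := Real.geom_mean_le_arith_mean_weighted Finset.univ (fun _ : Fin n => (n : ℝ)⁻¹)
    (fun i => y ^ (d i * n)) (fun _ _ => by positivity) (by simp [hn])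
    (fun _ _ => by positivity)
  refine le_trans (le_of_eq ?_) h
  rw [← Finset.prod_pow_eq_pow_sum]
  refine Finset.prod_congr rfl fun i _ => ?_
  rw [pow_mul, Real.pow_rpow_inv_natCast (by positivity) hn]

lemma sum_shift (q : ℕ) (b : Fin q) (f : ℕ → ℝ) :
    ∑ a : Fin q, f (((b : ℕ) + (a : ℕ)) % q) = ∑ a : Fin q, f a := by
  haveI : NeZero q := ⟨by have := b.2; omega⟩
  rw [← Equiv.sum_comp (Equiv.addLeft b) (fun a : Fin q => f a)]
  simp [Fin.val_add]

/-- For `0 < x ≤ 1` and any dit string `u`,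
`Σ_a x^{-‖u^{↑a}‖} ≤ Σ_a x^{-a·n}`. -/
theorem stmt_13 (q n : ℕ) (hq : 1 ≤ q) (x : ℝ) (hx0 : 0 < x) (hx1 : x ≤ 1)
    (u : Fin n → Fin q) :
    ∑ a : Fin q, x ^ (-((∑ i : Fin n, (((u i : ℕ) + (a : ℕ)) % q) : ℕ) : ℤ))
      ≤ ∑ a : Fin q, x ^ (-(((a : ℕ) : ℤ) * (n : ℤ))) := by
  have key : ∀ m : ℕ, x ^ (-(m : ℤ)) = x⁻¹ ^ m := fun m => by
    rw [zpow_neg, zpow_natCast, inv_pow]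
  simp only [← Nat.cast_mul, key]
  rcases eq_or_ne n 0 with rfl | hn
  · simp
  calc _ ≤ ∑ a : Fin q, ∑ i : Fin n, (n : ℝ)⁻¹ * x⁻¹ ^ ((((u i : ℕ) + (a : ℕ)) % q) * n) :=
        Finset.sum_le_sum fun a _ => pow_sum_le_avg n hn _ (by positivity) _
    _ = ∑ i : Fin n, (n : ℝ)⁻¹ * ∑ a : Fin q, x⁻¹ ^ ((a : ℕ) * n) := by
        rw [Finset.sum_comm]
        refine Finset.sum_congr rfl fun i _ => ?_
        rw [← Finset.mul_sum, sum_shift q (u i) (fun k => x⁻¹ ^ (k * n))]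
    _ = _ := by
        rw [Finset.sum_const, Finset.card_univ, Fintype.card_fin, nsmul_eq_mul,
          mul_inv_cancel_left₀ (Nat.cast_ne_zero.mpr hn)]
end

section
/- Fix natural numbers q ≥ 2 and n ≥ 1, and define F(γ) = [ q + n·Σ_{l=1}^{q-1} Σ_{a=0}^{q-1} C(a,l)·γ^l·(1-γ)^{-l} ] / [ Σ_{a=0}^{q-1} (1-γ)^{-a·n} ], where C(a,l) is the binomial coefficient (equal to 0 when l > a). Then F(γ) = 1 - ((q-1)(2q-1)(n² - n)/12)·γ² + O(γ³) as γ → 0⁺. -/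
/-!
Write `t = (1 - γ)⁻¹`. Since `1 + γ / (1 - γ) = t`, the binomial theorem turns the numerator into
`∑ a < q, (1 + n (t ^ a - 1))`, while the denominator is `D = ∑ a < q, t ^ (a n) ≥ q`
(`numerator_eq`). By `inv_pow_expansion`, `t ^ m = 1 + m γ + m (m + 1) / 2 γ² + O(γ³)`, so with
`c` the claimed quadratic coefficient, the numerator minus `(1 - c γ²) D` is
`∑ a < q, (c - (n² - n) a² / 2) γ² + O(γ³)`. The `γ²` part vanishes because
`∑ a < q, a² = (q - 1) q (2 q - 1) / 6`, and dividing by `D ≥ 1` preserves the bound.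
-/

/-- Second-order expansion of `(1 - γ)⁻ᵐ`. The remainder satisfies
`R (m + 1) = (1 - γ)⁻¹ (R m + (m + 1) (m + 2) / 2 γ³)`. -/
lemma inv_pow_expansion (m : ℕ) :
    ∃ K : ℝ, 0 ≤ K ∧ ∀ γ : ℝ, 0 < γ → γ < 1 / 2 →
      |((1 - γ)⁻¹) ^ m - (1 + m * γ + m * (m + 1) / 2 * γ ^ 2)| ≤ K * γ ^ 3 := by
  induction m with
  | zero => exact ⟨0, le_rfl, fun γ _ _ => by simp⟩
  | succ m ih =>
    obtain ⟨K, hK, h⟩ := ih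
    refine ⟨2 * (K + (m + 1) * (m + 2) / 2), by positivity, fun γ h0 h1 => ?_⟩
    have hne : (1 - γ) ≠ 0 := by linarith
    have ht2 : (1 - γ)⁻¹ ≤ 2 := by
      rw [inv_le_comm₀ (by linarith) (by norm_num)]; linarith
    have ht0 : 0 ≤ (1 - γ)⁻¹ := inv_nonneg.mpr (by linarith)
    have key : ((1 - γ)⁻¹) ^ (m + 1)
          - (1 + ((m + 1 : ℕ) : ℝ) * γ + ((m + 1 : ℕ) : ℝ) * (((m + 1 : ℕ) : ℝ) + 1) / 2 * γ ^ 2)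
        = (1 - γ)⁻¹ * ((((1 - γ)⁻¹) ^ m - (1 + m * γ + m * (m + 1) / 2 * γ ^ 2))
          + ((m : ℝ) + 1) * (m + 2) / 2 * γ ^ 3) := by
      rw [pow_succ]
      generalize ((1 - γ)⁻¹) ^ m = y
      push_cast
      field_simp
      ring
    rw [key, abs_mul, abs_of_nonneg ht0, mul_assoc]
    refine mul_le_mul ht2 ?_ (abs_nonneg _) (by norm_num)
    refine (abs_add_le _ _).trans ?_
    rw [abs_of_nonneg (a := ((m : ℝ) + 1) * (m + 2) / 2 * γ ^ 3) (by positivity), add_mul]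
    linarith [h γ h0 h1]

lemma numerator_eq (q n : ℕ) (hq : 1 ≤ q) (γ : ℝ) (h1 : γ < 1) :
    (q : ℝ) + (n : ℝ) * ∑ l ∈ Finset.Icc 1 (q - 1), ∑ a ∈ Finset.range q,
        (Nat.choose a l : ℝ) * γ ^ l * (1 - γ) ^ (-(l : ℤ))
      = ∑ a ∈ Finset.range q, (1 + (n : ℝ) * (((1 - γ)⁻¹) ^ a - 1)) := by
  have hne : (1 - γ) ≠ 0 := by linarith
  rw [Finset.sum_comm, Finset.sum_add_distrib, ← Finset.mul_sum]
  simp only [Finset.sum_const, Finset.card_range, nsmul_eq_mul, mul_one]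
  congr 2
  refine Finset.sum_congr rfl fun a ha => ?_
  have haq : a + 1 ≤ q := Finset.mem_range.mp ha
  have hx : (1 - γ)⁻¹ = γ * (1 - γ)⁻¹ + 1 := by field_simp; ring
  have hbin : ((1 - γ)⁻¹) ^ a
      = ∑ l ∈ Finset.range q, (Nat.choose a l : ℝ) * γ ^ l * (1 - γ) ^ (-(l : ℤ)) := by
    conv_lhs => rw [hx, add_pow]
    -- Terms with `a < l < q` vanish, as `C(a, l) = 0` there.
    refine (Finset.sum_congr rfl fun l _ => ?_).trans
      (Finset.sum_subset (Finset.range_subset_range.mpr haq) fun l _ hl => ?_)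
    · rw [zpow_neg, zpow_natCast, mul_pow, inv_pow]; ring
    · rw [Nat.choose_eq_zero_of_lt (by simpa using hl)]; simp
  obtain ⟨p, rfl⟩ : ∃ p, q = p + 1 := ⟨q - 1, by omega⟩
  rw [hbin, Finset.range_eq_Ico, Finset.sum_eq_sum_Ico_succ_bot (by omega)]
  simp
  rfl

lemma sum_sq_range (q : ℕ) :
    ∑ a ∈ Finset.range q, (a : ℝ) ^ 2 = ((q : ℝ) - 1) * q * (2 * q - 1) / 6 := by
  induction q with
  | zero => simp
  | succ q ih => rw [Finset.sum_range_succ, ih]; push_cast; ring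

/-- Worst-case fidelity of the NSA qudit self-complementary AD code:
`F(γ) = [q + nΣ_{l=1}^{q-1}Σ_{a<q} C(a,l)γ^l(1-γ)^{-l}] / Σ_{a<q}(1-γ)^{-an}
      = 1 - ((q-1)(2q-1)(n²-n)/12)γ² + O(γ³)` as `γ → 0⁺`. -/
theorem stmt_14 (q n : ℕ) (hq : 2 ≤ q) (hn : 1 ≤ n) :
    ∃ C : ℝ, 0 < C ∧ ∃ δ : ℝ, 0 < δ ∧ δ < 1 ∧
      ∀ γ : ℝ, 0 < γ → γ < δ →
        |((q : ℝ) + (n : ℝ) * ∑ l ∈ Finset.Icc 1 (q - 1), ∑ a ∈ Finset.range q,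
              (Nat.choose a l : ℝ) * γ ^ l * (1 - γ) ^ (-(l : ℤ)))
            / (∑ a ∈ Finset.range q, (1 - γ) ^ (-((a : ℤ) * (n : ℤ))))
          - (1 - ((q : ℝ) - 1) * (2 * (q : ℝ) - 1) * ((n : ℝ) ^ 2 - (n : ℝ)) / 12
              * γ ^ 2)| ≤ C * γ ^ 3 := by
  choose K hK hKb using inv_pow_expansion
  set c : ℝ := ((q : ℝ) - 1) * (2 * (q : ℝ) - 1) * ((n : ℝ) ^ 2 - (n : ℝ)) / 12 with hc
  -- Bound for the `γ³` remainder contributed by the index `a`.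
  let G : ℕ → ℝ := fun a => n * K a + K (a * n)
    + |c| * (K (a * n) + (a * n : ℕ) + (a * n : ℕ) * ((a * n : ℕ) + 1) / 2)
  have hG : ∀ a, 0 ≤ G a := fun a => by
    have := hK a
    have := hK (a * n)
    positivity
  refine ⟨∑ a ∈ Finset.range q, G a + 1,
    add_pos_of_nonneg_of_pos (Finset.sum_nonneg fun a _ => hG a) one_pos,
    1 / 2, by norm_num, by norm_num, fun γ h0 h1 => ?_⟩
  rw [numerator_eq q n (by omega) γ (by linarith)]
  have hD : ∑ a ∈ Finset.range q, (1 - γ) ^ (-((a : ℤ) * (n : ℤ)))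
      = ∑ a ∈ Finset.range q, ((1 - γ)⁻¹) ^ (a * n) :=
    Finset.sum_congr rfl fun a _ => by
      rw [zpow_neg, ← Nat.cast_mul, zpow_natCast, inv_pow]
  rw [hD]
  have ht : 1 ≤ (1 - γ)⁻¹ := (one_le_inv₀ (by linarith)).mpr (by linarith)
  have hD1 : 1 ≤ ∑ a ∈ Finset.range q, ((1 - γ)⁻¹) ^ (a * n) := by
    calc (1 : ℝ) ≤ q := by exact_mod_cast (by omega : 1 ≤ q)
      _ = ∑ a ∈ Finset.range q, (1 : ℝ) := by simp
      _ ≤ _ := Finset.sum_le_sum fun a _ => one_le_pow₀ ht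
  have hzero : ∑ a ∈ Finset.range q, (c - ((n : ℝ) ^ 2 - n) / 2 * (a : ℝ) ^ 2) * γ ^ 2 = 0 := by
    rw [← Finset.sum_mul, Finset.sum_sub_distrib, ← Finset.mul_sum, sum_sq_range, hc]
    simp only [Finset.sum_const, Finset.card_range, nsmul_eq_mul]
    ring
  have hnum : |∑ a ∈ Finset.range q, (1 + (n : ℝ) * (((1 - γ)⁻¹) ^ a - 1))
      - (1 - c * γ ^ 2) * ∑ a ∈ Finset.range q, ((1 - γ)⁻¹) ^ (a * n)|
      ≤ (∑ a ∈ Finset.range q, G a) * γ ^ 3 := by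
    rw [Finset.mul_sum, ← Finset.sum_sub_distrib, ← sub_zero (Finset.sum _ _), ← hzero,
      ← Finset.sum_sub_distrib, Finset.sum_mul]
    refine (Finset.abs_sum_le_sum_abs _ _).trans (Finset.sum_le_sum fun a _ => ?_)
    have e1 := hKb a γ h0 h1
    have e2 := hKb (a * n) γ h0 h1
    have hKn := hK (a * n)
    set E1 := ((1 - γ)⁻¹) ^ a - (1 + a * γ + a * (a + 1) / 2 * γ ^ 2) with hE1
    set E2 := ((1 - γ)⁻¹) ^ (a * n)
      - (1 + (a * n : ℕ) * γ + (a * n : ℕ) * ((a * n : ℕ) + 1) / 2 * γ ^ 2) with hE2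
    have hsplit : 1 + (n : ℝ) * (((1 - γ)⁻¹) ^ a - 1) - (1 - c * γ ^ 2) * ((1 - γ)⁻¹) ^ (a * n)
        - (c - ((n : ℝ) ^ 2 - n) / 2 * (a : ℝ) ^ 2) * γ ^ 2
        = n * E1 - E2 + c * (γ ^ 2 * E2 + (a * n : ℕ) * γ ^ 3
          + (a * n : ℕ) * ((a * n : ℕ) + 1) / 2 * γ ^ 4) := by
      rw [hE1, hE2]; push_cast; ring
    have h43 : γ ^ 4 ≤ γ ^ 3 := pow_le_pow_of_le_one h0.le (by linarith) (by norm_num)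
    have hγ2 : γ ^ 2 ≤ 1 := pow_le_one₀ h0.le (by linarith)
    have hin : |γ ^ 2 * E2 + (a * n : ℕ) * γ ^ 3 + (a * n : ℕ) * ((a * n : ℕ) + 1) / 2 * γ ^ 4|
        ≤ (K (a * n) + (a * n : ℕ) + (a * n : ℕ) * ((a * n : ℕ) + 1) / 2) * γ ^ 3 := by
      refine (abs_add_three _ _ _).trans ?_
      rw [add_mul, add_mul]
      refine add_le_add (add_le_add ?_ ?_) ?_
      · rw [abs_mul, abs_of_nonneg (sq_nonneg γ)]
        exact (mul_le_of_le_one_left (abs_nonneg _) hγ2).trans e2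
      · exact (abs_of_nonneg (by positivity)).le
      · rw [abs_of_nonneg (by positivity)]
        exact mul_le_mul_of_nonneg_left h43 (by positivity)
    rw [hsplit]
    refine (abs_add_le _ _).trans ?_
    simp only [G]
    rw [add_mul, add_mul, mul_assoc, mul_assoc]
    refine add_le_add ((abs_sub _ _).trans (add_le_add ?_ e2)) ?_
    · rw [abs_mul, Nat.abs_cast]
      exact mul_le_mul_of_nonneg_left e1 (Nat.cast_nonneg n)
    · rw [abs_mul]
      exact mul_le_mul_of_nonneg_left hin (abs_nonneg c)
  have hDpos := one_pos.trans_le hD1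
  rw [div_sub' hDpos.ne', abs_div, abs_of_pos hDpos, mul_comm (Finset.sum _ _) (1 - c * γ ^ 2)]
  refine (div_le_self (abs_nonneg _) hD1).trans (hnum.trans ?_)
  exact mul_le_mul_of_nonneg_right (by linarith) (by positivity)
end

section
/- Define F(γ) = 3/(1 + (1-γ)^{-4} + (1-γ)^{-8}) + 12γ/((1-γ) + (1-γ)^{-3} + (1-γ)^{-7}) + 4γ²/((1-γ)² + (1-γ)^{-2} + (1-γ)^{-6}). Then F(γ) = 1 - 10γ² + O(γ³) as γ → 0⁺. -/
/-!
With `x = 1 - γ` and `D = x ^ 8 + x ^ 4 + 1`, multiplying numerators and denominators by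
`x ^ 8`, `x ^ 7`, `x ^ 6` respectively puts the three fractions over the common denominator `D`:
`F(γ) = (3 x ^ 8 + 12 γ x ^ 7 + 4 γ ^ 2 x ^ 6) / D`.  Expanding in `γ`, the numerator of
`F(γ) - (1 - 10 γ ^ 2)` over `D` is `γ ^ 4` times an explicit polynomial of degree six.
Since `D ≥ 1`, bounding that polynomial by the sum of its absolute coefficients on `(0, 1)`
gives the claim (in fact with a remainder of order `γ ^ 4`).
-/

/-- The remainder of the second-order expansion as a single fraction. -/
lemma fidelity_remainder (γ : ℝ) (h : 0 < 1 - γ) :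
    3 / (1 + (1 - γ) ^ (-4 : ℤ) + (1 - γ) ^ (-8 : ℤ))
      + 12 * γ / ((1 - γ) + (1 - γ) ^ (-3 : ℤ) + (1 - γ) ^ (-7 : ℤ))
      + 4 * γ ^ 2 / ((1 - γ) ^ 2 + (1 - γ) ^ (-2 : ℤ) + (1 - γ) ^ (-6 : ℤ))
      - (1 - 10 * γ ^ 2)
    = γ ^ 4 * (119 - 372 * γ + 574 * γ ^ 2 - 516 * γ ^ 3 + 274 * γ ^ 4 - 80 * γ ^ 5
        + 10 * γ ^ 6) / ((1 - γ) ^ 8 + (1 - γ) ^ 4 + 1) := by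
  obtain ⟨x, hx⟩ : ∃ x, x = 1 - γ := ⟨_, rfl⟩
  rw [← hx] at h ⊢
  have hD : 0 < x ^ 8 + x ^ 4 + 1 := by positivity
  have e (n : ℕ) : x ^ (-(n : ℤ)) = 1 / x ^ n := by simp
  have e2 := e 2
  have e3 := e 3
  have e4 := e 4
  have e6 := e 6
  have e7 := e 7
  have e8 := e 8
  push_cast at e2 e3 e4 e6 e7 e8
  have h1 : 1 + x ^ (-4 : ℤ) + x ^ (-8 : ℤ) = (x ^ 8 + x ^ 4 + 1) / x ^ 8 := by
    rw [e4, e8]; field_simp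
  have h2 : x + x ^ (-3 : ℤ) + x ^ (-7 : ℤ) = (x ^ 8 + x ^ 4 + 1) / x ^ 7 := by
    rw [e3, e7]; field_simp
  have h3 : x ^ 2 + x ^ (-2 : ℤ) + x ^ (-6 : ℤ) = (x ^ 8 + x ^ 4 + 1) / x ^ 6 := by
    rw [e2, e6]; field_simp
  rw [h1, h2, h3, div_div_eq_mul_div, div_div_eq_mul_div, div_div_eq_mul_div, ← add_div,
    ← add_div, eq_div_iff hD.ne', sub_mul, div_mul_cancel₀ _ hD.ne', hx]
  ring

/-- Worst-case fidelity of the NSA ((4,1)) qutrit self-complementary AD code: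
`F(γ) = 3/(1+(1-γ)^{-4}+(1-γ)^{-8}) + 12γ/((1-γ)+(1-γ)^{-3}+(1-γ)^{-7})
        + 4γ²/((1-γ)²+(1-γ)^{-2}+(1-γ)^{-6}) = 1 - 10γ² + O(γ³)` as `γ → 0⁺`. -/
theorem stmt_16 :
    ∃ C : ℝ, 0 < C ∧ ∃ δ : ℝ, 0 < δ ∧ δ < 1 ∧
      ∀ γ : ℝ, 0 < γ → γ < δ →
        |3 / (1 + (1 - γ) ^ (-4 : ℤ) + (1 - γ) ^ (-8 : ℤ))
          + 12 * γ / ((1 - γ) + (1 - γ) ^ (-3 : ℤ) + (1 - γ) ^ (-7 : ℤ))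
          + 4 * γ ^ 2 / ((1 - γ) ^ 2 + (1 - γ) ^ (-2 : ℤ) + (1 - γ) ^ (-6 : ℤ))
          - (1 - 10 * γ ^ 2)| ≤ C * γ ^ 3 := by
  refine ⟨1945, by norm_num, 1 / 2, by norm_num, by norm_num, fun γ h0 hδ => ?_⟩
  have hx : 0 < 1 - γ := by linarith
  rw [fidelity_remainder γ hx]
  have hD : 1 ≤ (1 - γ) ^ 8 + (1 - γ) ^ 4 + 1 := by
    have : 0 < (1 - γ) ^ 8 + (1 - γ) ^ 4 := by positivity
    linarith
  have b (n : ℕ) : 0 ≤ γ ^ n ∧ γ ^ n ≤ 1 :=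
    ⟨by positivity, pow_le_one₀ h0.le (by linarith)⟩
  -- `1945` is the sum of the absolute values of the coefficients.
  have hP : |119 - 372 * γ + 574 * γ ^ 2 - 516 * γ ^ 3 + 274 * γ ^ 4 - 80 * γ ^ 5
      + 10 * γ ^ 6| ≤ 1945 := by
    rw [abs_le]
    constructor <;> linarith [(b 2).1, (b 2).2, (b 3).1, (b 3).2,
      (b 4).1, (b 4).2, (b 5).1, (b 5).2, (b 6).1, (b 6).2]
  rw [abs_div, abs_mul, abs_of_nonneg (b 4).1, abs_of_pos (by linarith : 0 < (1 - γ) ^ 8 +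
    (1 - γ) ^ 4 + 1)]
  have h43 : γ ^ 4 ≤ γ ^ 3 := pow_le_pow_of_le_one h0.le (by linarith) (by norm_num)
  calc _ ≤ γ ^ 4 * |119 - 372 * γ + 574 * γ ^ 2 - 516 * γ ^ 3 + 274 * γ ^ 4 - 80 * γ ^ 5
      + 10 * γ ^ 6| := div_le_self (by positivity) hD
    _ ≤ γ ^ 3 * 1945 := mul_le_mul h43 hP (abs_nonneg _) (by positivity)
    _ = 1945 * γ ^ 3 := mul_comm _ _
end

section
/- Define m(γ) = min{ 2/(1 + (1-γ)^{-4}) , (1-γ)² } and F(γ) = m(γ) + (2γ/(1-γ))·m(γ). Then F(γ) = 1 - 3γ² + O(γ³) as γ → 0⁺. -/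
/-!
With `u = 1 - γ`, the inequality `2u² ≤ 1 + u⁴` shows that the minimum is always its first
entry, which equals `2u⁴ / (1 + u⁴)`. Hence `F(γ) = 2u³(1 + γ) / (1 + u⁴)`, and the difference
`F(γ) - (1 - 3γ²)` is exactly `γ³(-4 + 15γ - 12γ² + 3γ³) / (1 + u⁴)`, whose cofactor of `γ³` is
bounded near `0`.
-/

/-- Worst-case fidelity of the NSA 0-2-4 binomial code:
with `m(γ) = min{2/(1+(1-γ)^{-4}), (1-γ)²}`,
`F(γ) = m(γ) + (2γ/(1-γ))m(γ) = 1 - 3γ² + O(γ³)` as `γ → 0⁺`. -/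
theorem stmt_19 :
    ∃ C : ℝ, 0 < C ∧ ∃ δ : ℝ, 0 < δ ∧ δ < 1 ∧
      ∀ γ : ℝ, 0 < γ → γ < δ →
        |min (2 / (1 + (1 - γ) ^ (-4 : ℤ))) ((1 - γ) ^ 2)
          + (2 * γ / (1 - γ)) * min (2 / (1 + (1 - γ) ^ (-4 : ℤ))) ((1 - γ) ^ 2)
          - (1 - 3 * γ ^ 2)| ≤ C * γ ^ 3 := by
  refine ⟨20, by norm_num, 1 / 2, by norm_num, by norm_num, fun γ h0 h1 => ?_⟩
  have hu : 0 < 1 - γ := by linarith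
  have hune : 1 - γ ≠ 0 := hu.ne'
  have hD : 1 ≤ 1 + (1 - γ) ^ 4 := by have := pow_pos hu 4; linarith
  have hDpos : 0 < 1 + (1 - γ) ^ 4 := by linarith
  have hz : (1 - γ) ^ (-4 : ℤ) = ((1 - γ) ^ 4)⁻¹ := by
    rw [zpow_neg]; norm_cast
  have hfirst : 2 / (1 + (1 - γ) ^ (-4 : ℤ)) = 2 * (1 - γ) ^ 4 / (1 + (1 - γ) ^ 4) := by
    rw [hz]
    have : 1 + ((1 - γ) ^ 4)⁻¹ = (1 + (1 - γ) ^ 4) / (1 - γ) ^ 4 := by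
      field_simp
      ring
    rw [this, div_div_eq_mul_div]
  have hle : 2 * (1 - γ) ^ 4 / (1 + (1 - γ) ^ 4) ≤ (1 - γ) ^ 2 := by
    rw [div_le_iff₀ hDpos]
    -- the difference of the two sides is `u² (u² - 1)²`
    nlinarith [sq_nonneg ((1 - γ) * ((1 - γ) ^ 2 - 1))]
  rw [hfirst, min_eq_left hle]
  have hkey : 2 * (1 - γ) ^ 4 / (1 + (1 - γ) ^ 4)
      + 2 * γ / (1 - γ) * (2 * (1 - γ) ^ 4 / (1 + (1 - γ) ^ 4)) - (1 - 3 * γ ^ 2)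
      = γ ^ 3 * (-4 + 15 * γ - 12 * γ ^ 2 + 3 * γ ^ 3) / (1 + (1 - γ) ^ 4) := by
    have hDne := hDpos.ne'
    field_simp
    ring
  have h2 : γ ^ 2 ≤ 1 := pow_le_one₀ h0.le (by linarith)
  have h3 : γ ^ 3 ≤ 1 := pow_le_one₀ h0.le (by linarith)
  have p2 : 0 < γ ^ 2 := pow_pos h0 2
  have p3 : 0 < γ ^ 3 := pow_pos h0 3
  have hP : |-4 + 15 * γ - 12 * γ ^ 2 + 3 * γ ^ 3| ≤ 20 := by
    rw [abs_le]
    constructor <;> linarith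
  rw [hkey, abs_div, abs_mul, abs_of_pos p3, abs_of_pos hDpos, div_le_iff₀ hDpos]
  calc γ ^ 3 * |-4 + 15 * γ - 12 * γ ^ 2 + 3 * γ ^ 3|
      ≤ γ ^ 3 * 20 := by gcongr
    _ = 20 * γ ^ 3 * 1 := by ring
    _ ≤ 20 * γ ^ 3 * (1 + (1 - γ) ^ 4) := by gcongr
end
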